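/- Under the stated setup and assumptions, in both the spectral norm and the Frobenius norm one has max{‖sin∠(U_k,Û_k)‖, ‖sin∠(V_k,V̂_k)‖} ≤ (γ_k^{2q}/(1−γ_k)) · (‖Σ_⊥‖/σ_k) · ‖Ω_2Ω_1†‖₂, where ‖sin∠(M,N)‖ denotes the spectral (respectively Frobenius) norm of the diagonal matrix of sines of the canonical angles between the column spaces of M and N, i.e. max_j sin θ_j' (respectively (Σ_j sin² θ_j')^{1/2}). -/

import Mathlib

open scoped ENNReal
open Matrix

/-- The `j`-th largest singular value (0-indexed) of a complex matrix,
obtained as the decreasingly sorted square roots of the eigenvalues of `Mᴴ * M`. -/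
noncomputable def sval {m n : ℕ} (M : Matrix (Fin m) (Fin n) ℂ) (j : ℕ) : ℝ :=
  (List.insertionSort (· ≥ ·)
    ((List.ofFn (Matrix.isHermitian_conjTranspose_mul_self M).eigenvalues).map Real.sqrt)).getD j 0

/-- The Schatten-`p` norm (`p = ∞` gives the spectral norm). -/
noncomputable def schatten {m n : ℕ} (p : ℝ≥0∞) (M : Matrix (Fin m) (Fin n) ℂ) : ℝ :=
  if p = ⊤ then sval M 0
  else (∑ j ∈ Finset.range n, sval M j ^ p.toReal) ^ (1 / p.toReal)

/-- Moore–Penrose pseudoinverse of a full-row-rank matrix. -/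
noncomputable def rpinv {a b : ℕ} (M : Matrix (Fin a) (Fin b) ℂ) : Matrix (Fin b) (Fin a) ℂ :=
  Mᴴ * (M * Mᴴ)⁻¹

/-- Rectangular diagonal matrix with entries `σ (off), σ (off+1), …` on the diagonal. -/
noncomputable def diagRect (σ : ℕ → ℝ) (off a b : ℕ) : Matrix (Fin a) (Fin b) ℂ :=
  Matrix.of fun i j => if (i : ℕ) = (j : ℕ) then (σ (off + (i : ℕ)) : ℂ) else 0

/-- The first `b` columns of a matrix with `b + c` columns. -/
def colsL {a b c : ℕ} (M : Matrix (Fin a) (Fin (b + c)) ℂ) : Matrix (Fin a) (Fin b) ℂ :=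
  M.submatrix id (Fin.castAdd c)

/-- The last `c` columns of a matrix with `b + c` columns. -/
def colsR {a b c : ℕ} (M : Matrix (Fin a) (Fin (b + c)) ℂ) : Matrix (Fin a) (Fin c) ℂ :=
  M.submatrix id (Fin.natAdd b)

/-!
Let `P = Q Qᴴ` and let `γ = σ_{k+1} / σ_k`. Since `P A` has the singular value decomposition
`Û Σ̂ V̂ᴴ`, compare its two blocks with those of `A`. The cross term `Û₂ᴴ U_k` with the trailing
block is at most `γ` times the right sine `(1 - V̂_k V̂_kᴴ) V_k`, because the trailing Ritz values
are at most `σ_{k+1}` (Eckart–Young). The right sine is in turn bounded by the residual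
`(1 - P) A V_k` and `γ` times that cross term, and the left sine by the residual and the cross term.
Solving the coupled inequalities gives the factor `1 / (1 - γ)` for both sines, with no `√2`.

Finally, `P` fixes the range of `(A Aᴴ)^q A Ω`. Multiplying this matrix by `(V_kᴴ Ω)† Σ_k^{-2q}`
reproduces `A V_k` up to a term in the span of `U_⊥` of size `γ^{2q} ‖Σ_⊥‖ ‖Ω₂ Ω₁†‖`, which bounds
the residual. Only symmetry of the norm is used.
-/

section Norms

open scoped Matrix.Norms.L2Operator

variable {𝕜 l m n : Type*} [RCLike 𝕜] [Fintype l] [Fintype m] [Fintype n]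

/-- The Frobenius norm. Mathlib provides it as an instance that clashes with the spectral norm, so
it is recorded here as a function, leaving `‖·‖` for the spectral norm. -/
noncomputable def frobeniusNorm (M : Matrix m n 𝕜) : ℝ :=
  letI : NormedAddCommGroup (Matrix m n 𝕜) := Matrix.frobeniusNormedAddCommGroup
  ‖M‖

lemma frobeniusNorm_nonneg (M : Matrix m n 𝕜) : 0 ≤ frobeniusNorm M :=
  letI : NormedAddCommGroup (Matrix m n 𝕜) := Matrix.frobeniusNormedAddCommGroup
  norm_nonneg M

lemma frobeniusNorm_add_le (M N : Matrix m n 𝕜) :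
    frobeniusNorm (M + N) ≤ frobeniusNorm M + frobeniusNorm N :=
  letI : NormedAddCommGroup (Matrix m n 𝕜) := Matrix.frobeniusNormedAddCommGroup
  norm_add_le M N

lemma frobeniusNorm_conjTranspose (M : Matrix m n 𝕜) : frobeniusNorm Mᴴ = frobeniusNorm M :=
  Matrix.frobenius_norm_conjTranspose M

lemma frobeniusNorm_sq_eq_sum_col (M : Matrix m n 𝕜) :
    frobeniusNorm M ^ 2 = ∑ j, ‖WithLp.toLp 2 (M.col j)‖ ^ 2 := by
  rw [frobeniusNorm, Matrix.frobenius_norm_def, ← Real.sqrt_eq_rpow, Real.sq_sqrt (by positivity),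
    Finset.sum_comm]
  simp [EuclideanSpace.norm_sq_eq]

lemma frobeniusNorm_sq_eq_re_trace (M : Matrix m n 𝕜) :
    frobeniusNorm M ^ 2 = RCLike.re (Mᴴ * M).trace := by
  simp only [frobeniusNorm_sq_eq_sum_col, EuclideanSpace.norm_sq_eq, Matrix.trace,
    Matrix.diag_apply, Matrix.mul_apply, map_sum]
  simp [RCLike.mul_re, RCLike.norm_sq_eq_def, ← sq]

lemma frobeniusNorm_mul_le [DecidableEq m] (M : Matrix l m 𝕜) (N : Matrix m n 𝕜) :
    frobeniusNorm (M * N) ≤ ‖M‖ * frobeniusNorm N := by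
  refine (sq_le_sq₀ (frobeniusNorm_nonneg _)
    (mul_nonneg (norm_nonneg _) (frobeniusNorm_nonneg _))).mp ?_
  simp only [mul_pow, frobeniusNorm_sq_eq_sum_col, Finset.mul_sum]
  gcongr with j
  rw [← mul_pow]
  gcongr
  exact l2_opNorm_mulVec M (WithLp.toLp 2 (N.col j))

variable [DecidableEq n]

lemma norm_eigenvalues {M : Matrix n n 𝕜} (hM : M.IsHermitian) : ‖hM.eigenvalues‖ = ‖M‖ := by
  conv_rhs => rw [hM.spectral_theorem, Unitary.conjStarAlgAut_apply, ← Unitary.coe_star,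
    CStarRing.norm_mul_coe_unitary, CStarRing.norm_coe_unitary_mul, l2_opNorm_diagonal]
  simp [Pi.norm_def, Function.comp_apply, nnnorm]

lemma l2_opNorm_le_one_of_isometry {M : Matrix m n 𝕜} (hM : Mᴴ * M = 1) : ‖M‖ ≤ 1 := by
  have h : IsStarProjection (Mᴴ * M) := hM ▸ .one _
  have := l2_opNorm_conjTranspose_mul_self M ▸ h.norm_le
  nlinarith [norm_nonneg M]

lemma isStarProjection_mul_conjTranspose {M : Matrix m n 𝕜} (hM : Mᴴ * M = 1) :
    IsStarProjection (M * Mᴴ) where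
  isIdempotentElem := by
    rw [IsIdempotentElem, Matrix.mul_assoc, ← Matrix.mul_assoc Mᴴ, hM, Matrix.one_mul]
  isSelfAdjoint := isHermitian_mul_conjTranspose_self M

lemma l2_opNorm_mul_mul_le_of_le_one {o : Type*} [Fintype o] [DecidableEq m] [DecidableEq o]
    {L : Matrix l m 𝕜} {R : Matrix n o 𝕜} (hL : ‖L‖ ≤ 1) (M : Matrix m n 𝕜)
    (hR : ‖R‖ ≤ 1) : ‖L * M * R‖ ≤ ‖M‖ :=
  calc ‖L * M * R‖ ≤ ‖L‖ * ‖M‖ * ‖R‖ :=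
        (l2_opNorm_mul _ _).trans (by gcongr; exact l2_opNorm_mul L M)
    _ ≤ 1 * ‖M‖ * 1 := by gcongr
    _ = ‖M‖ := by ring

lemma l2_opNorm_conjTranspose_mul_le_one [DecidableEq l] {L : Matrix m l 𝕜} {R : Matrix m n 𝕜}
    (hL : Lᴴ * L = 1) (hR : Rᴴ * R = 1) : ‖Lᴴ * R‖ ≤ 1 := by
  classical
  exact (l2_opNorm_mul _ _).trans (mul_le_one₀
    ((l2_opNorm_conjTranspose L).trans_le (l2_opNorm_le_one_of_isometry hL)) (norm_nonneg R)
    (l2_opNorm_le_one_of_isometry hR))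

end Norms

section SingularValues

open scoped Matrix.Norms.L2Operator

variable {m n : ℕ}

lemma getD_zero_insertionSort_ofFn {f : Fin n → ℝ} (hf : 0 ≤ f) :
    ((List.ofFn f).insertionSort (· ≥ ·)).getD 0 0 = ‖f‖ := by
  have hmem : ∀ x, x ∈ (List.ofFn f).insertionSort (· ≥ ·) ↔ ∃ i, f i = x := by simp
  have hsorted := List.pairwise_insertionSort (· ≥ ·) (List.ofFn f)
  cases hl : (List.ofFn f).insertionSort (· ≥ ·) with
  | nil =>
    have : IsEmpty (Fin n) := ⟨fun i => by simpa [hl] using (hmem (f i)).mpr ⟨i, rfl⟩⟩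
    simp [Subsingleton.elim f 0]
  | cons x xs =>
    rw [hl] at hmem hsorted
    obtain ⟨i, rfl⟩ := (hmem x).mp List.mem_cons_self
    refine le_antisymm ((Real.le_norm_self _).trans (norm_le_pi_norm f i))
      ((pi_norm_le_iff_of_nonneg (hf i)).mpr fun j => ?_)
    rw [Real.norm_of_nonneg (hf j)]
    rcases List.mem_cons.mp ((hmem (f j)).mpr ⟨j, rfl⟩) with h | h
    · exact h.le
    · exact List.rel_of_pairwise_cons hsorted h

lemma sum_range_getD_insertionSort_ofFn {α β : Type*} [AddCommMonoid β] (r : α → α → Prop)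
    [DecidableRel r] (f : Fin n → α) (d : α) (g : α → β) :
    ∑ j ∈ Finset.range n, g (((List.ofFn f).insertionSort r).getD j d) = ∑ i, g (f i) := by
  have hperm := List.perm_insertionSort r (List.ofFn f)
  have hlen := hperm.length_eq.trans List.length_ofFn
  calc _ = (((List.ofFn f).insertionSort r).map g).sum := by
        rw [Finset.sum_range, ← List.sum_ofFn]
        congr 1
        exact List.ext_getElem (by simp [hlen]) fun j _ h => by simp_all
    _ = _ := by rw [(hperm.map g).sum_eq, List.map_ofFn, List.sum_ofFn]; rfl

lemma sval_zero (M : Matrix (Fin m) (Fin n) ℂ) : sval M 0 = ‖M‖ := by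
  have hM := isHermitian_conjTranspose_mul_self M
  rw [sval, List.map_ofFn,
    getD_zero_insertionSort_ofFn (f := Real.sqrt ∘ _) fun _ => Real.sqrt_nonneg _,
    ← mul_self_inj (norm_nonneg _) (norm_nonneg _), ← l2_opNorm_conjTranspose_mul_self,
    ← norm_eigenvalues hM, ← CStarRing.norm_star_mul_self]
  congr 1
  ext i
  exact Real.mul_self_sqrt (eigenvalues_conjTranspose_mul_self_nonneg M i)

lemma sum_sval_sq (M : Matrix (Fin m) (Fin n) ℂ) :
    ∑ j ∈ Finset.range n, sval M j ^ 2 = frobeniusNorm M ^ 2 := by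
  have hM := isHermitian_conjTranspose_mul_self M
  simp only [sval, List.map_ofFn]
  rw [sum_range_getD_insertionSort_ofFn _ _ _ (· ^ 2), frobeniusNorm_sq_eq_re_trace,
    hM.trace_eq_sum_eigenvalues, map_sum]
  exact Finset.sum_congr rfl fun i _ =>
    Real.sq_sqrt (eigenvalues_conjTranspose_mul_self_nonneg M i)

lemma schatten_top (M : Matrix (Fin m) (Fin n) ℂ) : schatten ⊤ M = ‖M‖ := by
  rw [schatten, if_pos rfl, sval_zero]

lemma schatten_two (M : Matrix (Fin m) (Fin n) ℂ) : schatten 2 M = frobeniusNorm M := by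
  simp only [schatten, if_neg ENNReal.ofNat_ne_top, ENNReal.toReal_ofNat, Real.rpow_ofNat,
    sum_sval_sq, ← Real.sqrt_eq_rpow, Real.sqrt_sq (frobeniusNorm_nonneg M)]

end SingularValues

section SymmetricSeminorms

open scoped Matrix.Norms.L2Operator

variable {𝕜 : Type*} [RCLike 𝕜] {a b c k : ℕ}

/-- Symmetric (unitarily invariant) seminorms, given compatibly on rectangular matrices of all
sizes. They are encoded by invariance under the conjugate transpose and the ideal property for the
spectral norm. -/
structure IsSymmetricSeminorm (N : ∀ {a b : ℕ}, Matrix (Fin a) (Fin b) 𝕜 → ℝ) : Prop where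
  nonneg {a b : ℕ} (M : Matrix (Fin a) (Fin b) 𝕜) : 0 ≤ N M
  add_le {a b : ℕ} (M L : Matrix (Fin a) (Fin b) 𝕜) : N (M + L) ≤ N M + N L
  conjTranspose {a b : ℕ} (M : Matrix (Fin a) (Fin b) 𝕜) : N Mᴴ = N M
  mul_le {a b c : ℕ} (M : Matrix (Fin a) (Fin b) 𝕜) (L : Matrix (Fin b) (Fin c) 𝕜) :
    N (M * L) ≤ ‖M‖ * N L

namespace IsSymmetricSeminorm

variable {N : ∀ {a b : ℕ}, Matrix (Fin a) (Fin b) 𝕜 → ℝ} (hN : IsSymmetricSeminorm N)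
include hN

lemma mul_le_of_le {M : Matrix (Fin a) (Fin b) 𝕜} {r : ℝ} (hM : ‖M‖ ≤ r)
    (L : Matrix (Fin b) (Fin c) 𝕜) : N (M * L) ≤ r * N L :=
  (hN.mul_le M L).trans (mul_le_mul_of_nonneg_right hM (hN.nonneg L))

lemma mul_le_of_le_one {M : Matrix (Fin a) (Fin b) 𝕜} (hM : ‖M‖ ≤ 1)
    (L : Matrix (Fin b) (Fin c) 𝕜) : N (M * L) ≤ N L :=
  (hN.mul_le_of_le hM L).trans_eq (one_mul _)

lemma mul_le_right (M : Matrix (Fin a) (Fin b) 𝕜) (L : Matrix (Fin b) (Fin c) 𝕜) :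
    N (M * L) ≤ N M * ‖L‖ := by
  rw [← hN.conjTranspose, conjTranspose_mul, mul_comm, ← hN.conjTranspose M,
    ← l2_opNorm_conjTranspose L]
  exact hN.mul_le _ _

lemma mul_le_right_of_le (M : Matrix (Fin a) (Fin b) 𝕜) {L : Matrix (Fin b) (Fin c) 𝕜} {r : ℝ}
    (hL : ‖L‖ ≤ r) : N (M * L) ≤ r * N M :=
  ((hN.mul_le_right M L).trans (mul_le_mul_of_nonneg_left hL (hN.nonneg M))).trans_eq (mul_comm _ _)

lemma le_mul_of_mul_eq_one {D E : Matrix (Fin k) (Fin k) 𝕜} (hDE : D * E = 1) {r : ℝ}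
    (hE : ‖E‖ ≤ r) (M : Matrix (Fin a) (Fin k) 𝕜) : N M ≤ r * N (M * D) := by
  simpa only [Matrix.mul_assoc, hDE, Matrix.mul_one] using hN.mul_le_right_of_le (M * D) hE

lemma pow_mul_le {M : Matrix (Fin a) (Fin a) 𝕜} {r : ℝ} (hM : ‖M‖ ≤ r) (q : ℕ)
    (L : Matrix (Fin a) (Fin b) 𝕜) : N (M ^ q * L) ≤ r ^ q * N L := by
  induction q with
  | zero => simp
  | succ q ih =>
    calc N (M ^ (q + 1) * L) = N (M * (M ^ q * L)) := by rw [pow_succ', Matrix.mul_assoc]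
      _ ≤ r * (r ^ q * N L) :=
        (hN.mul_le_of_le hM _).trans (mul_le_mul_of_nonneg_left ih ((norm_nonneg M).trans hM))
      _ = r ^ (q + 1) * N L := by ring

lemma mul_pow_le {M : Matrix (Fin b) (Fin b) 𝕜} {r : ℝ} (hM : ‖M‖ ≤ r) (q : ℕ)
    (L : Matrix (Fin a) (Fin b) 𝕜) : N (L * M ^ q) ≤ r ^ q * N L := by
  rw [← hN.conjTranspose, conjTranspose_mul, conjTranspose_pow, ← hN.conjTranspose L]
  exact hN.pow_mul_le ((l2_opNorm_conjTranspose M).trans_le hM) q Lᴴ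

end IsSymmetricSeminorm

lemma isSymmetricSeminorm_l2_opNorm :
    IsSymmetricSeminorm fun {a b} (M : Matrix (Fin a) (Fin b) 𝕜) => ‖M‖ where
  nonneg := norm_nonneg
  add_le := norm_add_le
  conjTranspose := l2_opNorm_conjTranspose
  mul_le := l2_opNorm_mul

lemma isSymmetricSeminorm_frobeniusNorm :
    IsSymmetricSeminorm fun {a b} (M : Matrix (Fin a) (Fin b) 𝕜) => frobeniusNorm M where
  nonneg := frobeniusNorm_nonneg
  add_le := frobeniusNorm_add_le
  conjTranspose := frobeniusNorm_conjTranspose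
  mul_le := frobeniusNorm_mul_le

lemma isSymmetricSeminorm_schatten {p : ℝ≥0∞} (hp : p ∈ ({2, ⊤} : Set ℝ≥0∞)) :
    IsSymmetricSeminorm fun {a b} (M : Matrix (Fin a) (Fin b) ℂ) => schatten p M := by
  rcases hp with rfl | rfl
  · simpa only [schatten_two] using isSymmetricSeminorm_frobeniusNorm
  · simpa only [schatten_top] using isSymmetricSeminorm_l2_opNorm

end SymmetricSeminorms

section BlockSVD

variable {𝕜 m n l a b c d e f : Type*} [RCLike 𝕜] [Fintype m] [Fintype n]
  [DecidableEq a] [DecidableEq b] [DecidableEq c] [DecidableEq d]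

/-- The columns of `U₁` and `U₂` together form an orthonormal family. -/
structure IsOrthonormalPair (U₁ : Matrix m a 𝕜) (U₂ : Matrix m b 𝕜) : Prop where
  left : U₁ᴴ * U₁ = 1
  right : U₂ᴴ * U₂ = 1
  orthogonal : U₁ᴴ * U₂ = 0

namespace IsOrthonormalPair

variable {U₁ : Matrix m a 𝕜} {U₂ : Matrix m b 𝕜}

lemma symm (h : IsOrthonormalPair U₁ U₂) : IsOrthonormalPair U₂ U₁ where
  left := h.right
  right := h.left
  orthogonal := by simpa using congrArg conjTranspose h.orthogonal

lemma conjTranspose_snd_mul [Fintype a] [Fintype b] (h : IsOrthonormalPair U₁ U₂) :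
    U₂ᴴ * (U₁ * U₁ᴴ + U₂ * U₂ᴴ) = U₂ᴴ := by
  rw [Matrix.mul_add, ← Matrix.mul_assoc, ← Matrix.mul_assoc, h.symm.orthogonal, h.right,
    Matrix.zero_mul, Matrix.one_mul, zero_add]

lemma isStarProjection [Fintype a] [Fintype b] (h : IsOrthonormalPair U₁ U₂) :
    IsStarProjection (U₁ * U₁ᴴ + U₂ * U₂ᴴ) :=
  (isStarProjection_mul_conjTranspose h.left).add (isStarProjection_mul_conjTranspose h.right) <| by
    rw [Matrix.mul_assoc, ← Matrix.mul_assoc U₁ᴴ, h.orthogonal, Matrix.zero_mul, Matrix.mul_zero]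

end IsOrthonormalPair

/-- A singular value decomposition of `A` split into two blocks, `A = U₁ D V₁ᴴ + U₂ S V₂ᴴ`. The
blocks `D` and `S` are arbitrary matrices, so this only says that `A` maps the span of `V₁` to that
of `U₁` and the span of `V₂` to that of `U₂`, and vanishes on the complement. -/
structure IsBlockSVD [Fintype a] [Fintype b] [Fintype c] [Fintype d]
    (A : Matrix m n 𝕜) (U₁ : Matrix m a 𝕜) (D : Matrix a b 𝕜) (V₁ : Matrix n b 𝕜)
    (U₂ : Matrix m c 𝕜) (S : Matrix c d 𝕜) (V₂ : Matrix n d 𝕜) : Prop where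
  left : IsOrthonormalPair U₁ U₂
  right : IsOrthonormalPair V₁ V₂
  eq : A = U₁ * D * V₁ᴴ + U₂ * S * V₂ᴴ

namespace IsBlockSVD

variable [Fintype a] [Fintype b] [Fintype c] [Fintype d]
  {A : Matrix m n 𝕜} {U₁ : Matrix m a 𝕜} {D : Matrix a b 𝕜} {V₁ : Matrix n b 𝕜}
  {U₂ : Matrix m c 𝕜} {S : Matrix c d 𝕜} {V₂ : Matrix n d 𝕜}

lemma swap (h : IsBlockSVD A U₁ D V₁ U₂ S V₂) : IsBlockSVD A U₂ S V₂ U₁ D V₁ where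
  left := h.left.symm
  right := h.right.symm
  eq := h.eq.trans (add_comm _ _)

lemma conjTranspose (h : IsBlockSVD A U₁ D V₁ U₂ S V₂) : IsBlockSVD Aᴴ V₁ Dᴴ U₁ V₂ Sᴴ U₂ where
  left := h.right
  right := h.left
  eq := by simp [h.eq, Matrix.mul_assoc]

lemma mul_right_fst (h : IsBlockSVD A U₁ D V₁ U₂ S V₂) : A * V₁ = U₁ * D := by
  simp only [h.eq, Matrix.add_mul, Matrix.mul_assoc, h.right.left, h.right.symm.orthogonal,
    Matrix.mul_one, Matrix.mul_zero, add_zero]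

lemma left_snd_mul (h : IsBlockSVD A U₁ D V₁ U₂ S V₂) : U₂ᴴ * A = S * V₂ᴴ := by
  simpa using congrArg Matrix.conjTranspose h.conjTranspose.swap.mul_right_fst

lemma one_sub_mul [DecidableEq m] (h : IsBlockSVD A U₁ D V₁ U₂ S V₂) :
    (1 - U₁ * U₁ᴴ) * A = U₂ * S * V₂ᴴ := by
  rw [Matrix.sub_mul, Matrix.one_mul, Matrix.mul_assoc, h.swap.left_snd_mul, ← Matrix.mul_assoc,
    sub_eq_of_eq_add' h.eq]

lemma mul [Fintype l] [Fintype e] [Fintype f] [DecidableEq e] [DecidableEq f]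
    {B : Matrix n l 𝕜} {D' : Matrix b e 𝕜} {W₁ : Matrix l e 𝕜}
    {S' : Matrix d f 𝕜} {W₂ : Matrix l f 𝕜} (hA : IsBlockSVD A U₁ D V₁ U₂ S V₂)
    (hB : IsBlockSVD B V₁ D' W₁ V₂ S' W₂) : IsBlockSVD (A * B) U₁ (D * D') W₁ U₂ (S * S') W₂ where
  left := hA.left
  right := hB.right
  eq := by
    rw [hB.eq, Matrix.mul_add, ← Matrix.mul_assoc, ← Matrix.mul_assoc, hA.mul_right_fst,
      ← Matrix.mul_assoc, ← Matrix.mul_assoc, hA.swap.mul_right_fst]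
    simp only [Matrix.mul_assoc]

lemma powerIterate [DecidableEq m] (h : IsBlockSVD A U₁ D V₁ U₂ S V₂) (q : ℕ) :
    IsBlockSVD ((A * Aᴴ) ^ q * A) U₁ ((D * Dᴴ) ^ q * D) V₁ U₂ ((S * Sᴴ) ^ q * S) V₂ := by
  induction q with
  | zero => simpa using h
  | succ q ih =>
    simpa only [pow_succ', Matrix.mul_assoc] using h.mul (h.conjTranspose.mul ih)

end IsBlockSVD

end BlockSVD

section Submatrices

open scoped Matrix.Norms.L2Operator

variable {𝕜 m n a b : Type*} [RCLike 𝕜] [Fintype m] [DecidableEq n]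

lemma conjTranspose_submatrix_mul_submatrix {M : Matrix m n 𝕜} (hM : Mᴴ * M = 1) (f : a → n)
    (g : b → n) : (M.submatrix id f)ᴴ * M.submatrix id g = (1 : Matrix n n 𝕜).submatrix f g := by
  rw [conjTranspose_submatrix, ← submatrix_mul _ _ f id g Function.bijective_id, hM]

lemma submatrix_isometry [DecidableEq a] {M : Matrix m n 𝕜} (hM : Mᴴ * M = 1) {f : a → n}
    (hf : Function.Injective f) : (M.submatrix id f)ᴴ * M.submatrix id f = 1 := by
  rw [conjTranspose_submatrix_mul_submatrix hM, submatrix_one f hf]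

lemma l2_opNorm_submatrix_le [Fintype n] [Fintype a] [Fintype b] [DecidableEq b]
    (M : Matrix m n 𝕜) {f : a → m} {g : b → n} (hf : Function.Injective f)
    (hg : Function.Injective g) : ‖M.submatrix f g‖ ≤ ‖M‖ := by
  classical
  have hfactor : M.submatrix f g =
      ((1 : Matrix m m 𝕜).submatrix id f)ᴴ * M * (1 : Matrix n n 𝕜).submatrix id g := by
    rw [conjTranspose_submatrix, conjTranspose_one]
    ext i j
    simp [Matrix.mul_apply, Matrix.one_apply]
  have hf' : ‖(1 : Matrix m m 𝕜).submatrix id f‖ ≤ 1 :=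
    l2_opNorm_le_one_of_isometry (submatrix_isometry (by simp) hf)
  have hg' : ‖(1 : Matrix n n 𝕜).submatrix id g‖ ≤ 1 :=
    l2_opNorm_le_one_of_isometry (submatrix_isometry (by simp) hg)
  rw [hfactor]
  exact l2_opNorm_mul_mul_le_of_le_one ((l2_opNorm_conjTranspose _).trans_le hf') M hg'

end Submatrices

section DiagRect

open scoped Matrix.Norms.L2Operator

variable {k a b c d m n : ℕ}

lemma isOrthonormalPair_colsL_colsR {M : Matrix (Fin a) (Fin (b + c)) ℂ} (hM : Mᴴ * M = 1) :
    IsOrthonormalPair (colsL M) (colsR M) where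
  left := submatrix_isometry hM (Fin.castAdd_injective b c)
  right := submatrix_isometry hM (Fin.natAdd_injective c b)
  orthogonal := (conjTranspose_submatrix_mul_submatrix hM _ _).trans <| by
    ext i j
    simp [Matrix.one_apply, Fin.ext_iff]
    omega

lemma mul_conjTranspose_eq_colsL_add_colsR (M : Matrix (Fin a) (Fin (b + c)) ℂ)
    (N : Matrix (Fin d) (Fin (b + c)) ℂ) :
    M * Nᴴ = colsL M * (colsL N)ᴴ + colsR M * (colsR N)ᴴ := by
  ext i j
  simp [Matrix.mul_apply, Fin.sum_univ_add, colsL, colsR]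

lemma colsL_mul_diagRect (M : Matrix (Fin d) (Fin (k + a)) ℂ) (σ : ℕ → ℝ) :
    colsL (M * diagRect σ 0 (k + a) (k + b)) = colsL M * diagonal fun i : Fin k => (σ i : ℂ) := by
  ext i j
  have hne (x : Fin a) : k + (x : ℕ) ≠ j := by omega
  simp [colsL, diagRect, Matrix.mul_apply, Fin.sum_univ_add, diagonal_apply, hne, Fin.val_inj]

lemma colsR_mul_diagRect (M : Matrix (Fin d) (Fin (k + a)) ℂ) (σ : ℕ → ℝ) :
    colsR (M * diagRect σ 0 (k + a) (k + b)) = colsR M * diagRect σ k a b := by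
  ext i j
  have hne (x : Fin k) : (x : ℕ) ≠ k + j := by omega
  simp [colsR, diagRect, Matrix.mul_apply, Fin.sum_univ_add, hne]

lemma isBlockSVD_diagRect {A : Matrix (Fin m) (Fin n) ℂ} {U : Matrix (Fin m) (Fin (k + a)) ℂ}
    {V : Matrix (Fin n) (Fin (k + b)) ℂ} {σ : ℕ → ℝ} (hU : Uᴴ * U = 1) (hV : Vᴴ * V = 1)
    (hA : A = U * diagRect σ 0 (k + a) (k + b) * Vᴴ) :
    IsBlockSVD A (colsL U) (diagonal fun i : Fin k => (σ i : ℂ)) (colsL V)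
      (colsR U) (diagRect σ k a b) (colsR V) where
  left := isOrthonormalPair_colsL_colsR hU
  right := isOrthonormalPair_colsL_colsR hV
  eq := by
    rw [hA, mul_conjTranspose_eq_colsL_add_colsR, colsL_mul_diagRect, colsR_mul_diagRect]

lemma diagRect_eq_submatrix_diagonal (σ : ℕ → ℝ) (off a b : ℕ) :
    diagRect σ off a b = (diagonal fun i : Fin (a + b) => (σ (off + i) : ℂ)).submatrix
      (Fin.castAdd b) (Fin.castLE (Nat.le_add_left b a)) := by
  ext i j
  simp [diagRect, diagonal_apply, Fin.ext_iff]

lemma l2_opNorm_diagRect_le {σ : ℕ → ℝ} (hσ0 : ∀ i, 0 ≤ σ i) (hσ : Antitone σ) (off a b : ℕ) :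
    ‖diagRect σ off a b‖ ≤ σ off := by
  rw [diagRect_eq_submatrix_diagonal]
  refine (l2_opNorm_submatrix_le _ (Fin.castAdd_injective a b) (Fin.castLE_injective _)).trans ?_
  rw [l2_opNorm_diagonal]
  refine (pi_norm_le_iff_of_nonneg (hσ0 off)).mpr fun i => ?_
  rw [Complex.norm_real, Real.norm_of_nonneg (hσ0 _)]
  exact hσ (Nat.le_add_right _ _)

end DiagRect

section EckartYoung

open scoped Matrix.Norms.L2Operator

variable {𝕜 b l : Type*} [RCLike 𝕜] [Fintype b] [Fintype l] [DecidableEq l]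

lemma le_l2_opNorm_of_diagonal_eq_mul_add {δ : l → 𝕜} {s : ℝ} (hδ : ∀ i, s ≤ ‖δ i‖)
    {L : Matrix l b 𝕜} {X : Matrix b l 𝕜} {M : Matrix l l 𝕜}
    (hcard : Fintype.card b < Fintype.card l) (heq : diagonal δ = L * X + M) : s ≤ ‖M‖ := by
  obtain ⟨x, hXx, hx⟩ := (Submodule.ne_bot_iff _).mp
    (LinearMap.ker_ne_bot_of_finrank_lt (f := X.mulVecLin) (by simpa using hcard))
  have hMx : M *ᵥ x = diagonal δ *ᵥ x := by
    rw [heq, Matrix.add_mulVec, ← Matrix.mulVec_mulVec, ← X.mulVecLin_apply,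
      LinearMap.mem_ker.mp hXx, Matrix.mulVec_zero, zero_add]
  have hle : s * ‖WithLp.toLp 2 x‖ ≤ ‖WithLp.toLp 2 (diagonal δ *ᵥ x)‖ := by
    rcases le_or_gt s 0 with hs | hs
    · exact (mul_nonpos_of_nonpos_of_nonneg hs (norm_nonneg _)).trans (norm_nonneg _)
    · refine (sq_le_sq₀ (by positivity) (norm_nonneg _)).mp ?_
      simp only [mul_pow, EuclideanSpace.norm_sq_eq, Matrix.mulVec_diagonal, norm_mul,
        Finset.mul_sum]
      gcongr with i
      exact hδ i
  have hx' : 0 < ‖WithLp.toLp 2 x‖ := norm_pos_iff.mpr (by simpa using hx)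
  refine le_of_mul_le_mul_right (hle.trans ?_) hx'
  rw [← hMx]
  exact M.l2_opNorm_mulVec (WithLp.toLp 2 x)

lemma IsBlockSVD.le_l2_opNorm_snd_of_compression_eq_diagonal {m n a c d : Type*} [Fintype m]
    [Fintype n] [Fintype a] [Fintype c] [Fintype d] [DecidableEq a] [DecidableEq b] [DecidableEq c]
    [DecidableEq d] {A : Matrix m n 𝕜} {U₁ : Matrix m a 𝕜} {D : Matrix a b 𝕜} {V₁ : Matrix n b 𝕜}
    {U₂ : Matrix m c 𝕜} {S : Matrix c d 𝕜} {V₂ : Matrix n d 𝕜}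
    (h : IsBlockSVD A U₁ D V₁ U₂ S V₂) {X : Matrix m l 𝕜} {Y : Matrix n l 𝕜} {δ : l → 𝕜} {s : ℝ}
    (hX : Xᴴ * X = 1) (hY : Yᴴ * Y = 1) (hXAY : Xᴴ * A * Y = diagonal δ)
    (hδ : ∀ i, s ≤ ‖δ i‖) (hcard : Fintype.card b < Fintype.card l) : s ≤ ‖S‖ := by
  have hsplit : diagonal δ = Xᴴ * U₁ * D * (V₁ᴴ * Y) + Xᴴ * U₂ * S * (V₂ᴴ * Y) := by
    rw [← hXAY, h.eq]
    simp only [Matrix.mul_add, Matrix.add_mul, Matrix.mul_assoc]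
  refine (le_l2_opNorm_of_diagonal_eq_mul_add hδ hcard hsplit).trans
    (l2_opNorm_mul_mul_le_of_le_one ?_ S ?_)
  · exact l2_opNorm_conjTranspose_mul_le_one hX h.left.right
  · exact l2_opNorm_conjTranspose_mul_le_one h.right.right hY

lemma IsBlockSVD.l2_opNorm_diagRect_le_of_compression {m n k ρ : ℕ} {a c d : Type*}
    [Fintype a] [Fintype c] [Fintype d] [DecidableEq a] [DecidableEq c] [DecidableEq d]
    {A : Matrix (Fin m) (Fin n) ℂ} {U₁ : Matrix (Fin m) a ℂ} {D : Matrix a (Fin k) ℂ}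
    {V₁ : Matrix (Fin n) (Fin k) ℂ} {U₂ : Matrix (Fin m) c ℂ} {S : Matrix c d ℂ}
    {V₂ : Matrix (Fin n) d ℂ} (h : IsBlockSVD A U₁ D V₁ U₂ S V₂)
    {X : Matrix (Fin m) (Fin (k + ρ)) ℂ} {Y : Matrix (Fin n) (Fin (k + ρ)) ℂ} {τ : ℕ → ℝ}
    (hX : Xᴴ * X = 1) (hY : Yᴴ * Y = 1) (hτ0 : ∀ i, 0 ≤ τ i) (hτ : Antitone τ)
    (hXAY : Xᴴ * A * Y = diagRect τ 0 (k + ρ) (k + ρ)) : ‖diagRect τ k ρ ρ‖ ≤ ‖S‖ := by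
  rcases Nat.eq_zero_or_pos ρ with rfl | hρ
  · rw [Subsingleton.elim (diagRect τ k 0 0) 0, norm_zero]
    exact norm_nonneg S
  have hinj := Fin.castLE_injective (show k + 1 ≤ k + ρ by omega)
  refine (l2_opNorm_diagRect_le hτ0 hτ k ρ ρ).trans
    (h.le_l2_opNorm_snd_of_compression_eq_diagonal (submatrix_isometry hX hinj)
      (submatrix_isometry hY hinj) (δ := fun i : Fin (k + 1) => (τ i : ℂ)) ?_ (fun i => ?_)
      (by simp))
  · ext i j
    have := congrFun₂ hXAY (Fin.castLE (by omega) i) (Fin.castLE (by omega) j)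
    simpa [diagRect, diagonal_apply, Fin.ext_iff, Matrix.mul_apply] using this
  · rw [Complex.norm_real, Real.norm_of_nonneg (hτ0 _)]
    exact hτ (Fin.is_le i)

end EckartYoung

section InverseDiagonal

open scoped Matrix.Norms.L2Operator

variable {𝕜 n : Type*} [RCLike 𝕜] [Fintype n] [DecidableEq n] {d : n → ℝ}

lemma diagonal_ofReal_mul_diagonal_inv (hd : ∀ i, 0 < d i) :
    diagonal (fun i => (d i : 𝕜)) * diagonal (fun i => (d i : 𝕜)⁻¹) = 1 := by
  rw [diagonal_mul_diagonal, ← diagonal_one]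
  exact congrArg diagonal
    (funext fun i => mul_inv_cancel₀ (RCLike.ofReal_ne_zero.mpr (hd i).ne'))

lemma l2_opNorm_diagonal_ofReal_inv_le {s : ℝ} (hs : 0 < s) (hd : ∀ i, s ≤ d i) :
    ‖diagonal fun i => (d i : 𝕜)⁻¹‖ ≤ s⁻¹ := by
  rw [l2_opNorm_diagonal]
  refine (pi_norm_le_iff_of_nonneg (by positivity)).mpr fun i => ?_
  rw [norm_inv, RCLike.norm_of_nonneg (hs.le.trans (hd i))]
  exact inv_anti₀ hs (hd i)

end InverseDiagonal

section Wedin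

open scoped Matrix.Norms.L2Operator

variable {𝕜 : Type*} [RCLike 𝕜] {m n k m₂ n₂ a b c d : ℕ}
  {A : Matrix (Fin m) (Fin n) 𝕜} {D E : Matrix (Fin k) (Fin k) 𝕜}
  {S : Matrix (Fin m₂) (Fin n₂) 𝕜}
  {U₁ : Matrix (Fin m) (Fin k) 𝕜} {U₂ : Matrix (Fin m) (Fin m₂) 𝕜}
  {V₁ : Matrix (Fin n) (Fin k) 𝕜} {V₂ : Matrix (Fin n) (Fin n₂) 𝕜}
  {P : Matrix (Fin m) (Fin m) 𝕜}
  {U₁' : Matrix (Fin m) (Fin a) 𝕜} {D' : Matrix (Fin a) (Fin b) 𝕜}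
  {V₁' : Matrix (Fin n) (Fin b) 𝕜} {U₂' : Matrix (Fin m) (Fin c) 𝕜}
  {S' : Matrix (Fin c) (Fin d) 𝕜} {V₂' : Matrix (Fin n) (Fin d) 𝕜} {e t : ℝ}

namespace IsSymmetricSeminorm

variable {N : ∀ {a b : ℕ}, Matrix (Fin a) (Fin b) 𝕜 → ℝ} (hN : IsSymmetricSeminorm N)
include hN

lemma right_residual_le (h : IsBlockSVD A U₁ D V₁ U₂ S V₂) (hP : IsStarProjection P)
    (hDE : D * E = 1) (hE : ‖E‖ ≤ e) (hS : ‖S‖ ≤ t) :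
    N (Aᴴ * ((1 - P) * U₁)) ≤ (1 + t * e) * N ((1 - P) * A * V₁) := by
  have ht : 0 ≤ t := (norm_nonneg S).trans hS
  have hP' := hP.one_sub
  set T := (1 - P) * U₁ with hT
  have hTD : (1 - P) * A * V₁ = T * D := by
    rw [Matrix.mul_assoc, h.mul_right_fst, ← Matrix.mul_assoc]
  have hU₁T : U₁ᴴ * T = Tᴴ * T := by
    rw [hT, conjTranspose_mul, ← star_eq_conjTranspose (1 - P), hP'.isSelfAdjoint.star_eq,
      Matrix.mul_assoc, ← Matrix.mul_assoc (1 - P), hP'.isIdempotentElem.eq]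
  have hT_one : ‖T‖ ≤ 1 := (l2_opNorm_mul _ _).trans
    (mul_le_one₀ hP'.norm_le (norm_nonneg _) (l2_opNorm_le_one_of_isometry h.left.left))
  have hAT : Aᴴ * T = V₁ * ((T * D)ᴴ * T) + V₂ * (Sᴴ * (U₂ᴴ * T)) := by
    rw [conjTranspose_mul, Matrix.mul_assoc Dᴴ, ← hU₁T, h.conjTranspose.eq]
    simp only [Matrix.add_mul, Matrix.mul_assoc]
  have hfst : N (V₁ * ((T * D)ᴴ * T)) ≤ N (T * D) :=
    calc N (V₁ * ((T * D)ᴴ * T)) ≤ N ((T * D)ᴴ * T) :=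
          hN.mul_le_of_le_one (l2_opNorm_le_one_of_isometry h.right.left) _
      _ ≤ N (T * D)ᴴ := (hN.mul_le_right_of_le _ hT_one).trans_eq (one_mul _)
      _ = N (T * D) := hN.conjTranspose _
  have hsnd : N (V₂ * (Sᴴ * (U₂ᴴ * T))) ≤ t * (e * N (T * D)) :=
    calc N (V₂ * (Sᴴ * (U₂ᴴ * T))) ≤ N (Sᴴ * (U₂ᴴ * T)) :=
          hN.mul_le_of_le_one (l2_opNorm_le_one_of_isometry h.right.right) _
      _ ≤ t * N (U₂ᴴ * T) := hN.mul_le_of_le ((l2_opNorm_conjTranspose S).trans_le hS) _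
      _ ≤ t * N T := by
        gcongr
        exact hN.mul_le_of_le_one ((l2_opNorm_conjTranspose U₂).trans_le
          (l2_opNorm_le_one_of_isometry h.left.right)) _
      _ ≤ t * (e * N (T * D)) := by gcongr; exact hN.le_mul_of_mul_eq_one hDE hE T
  calc N (Aᴴ * T) ≤ N (T * D) + t * (e * N (T * D)) := by
        rw [hAT]; exact (hN.add_le _ _).trans (add_le_add hfst hsnd)
    _ = (1 + t * e) * N ((1 - P) * A * V₁) := by rw [hTD]; ring

lemma left_cross_le (h : IsBlockSVD A U₁ D V₁ U₂ S V₂)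
    (h' : IsBlockSVD (P * A) U₁' D' V₁' U₂' S' V₂') (hP : U₂'ᴴ * P = U₂'ᴴ)
    (hDE : D * E = 1) (hE : ‖E‖ ≤ e) (hS' : ‖S'‖ ≤ t) :
    N (U₂'ᴴ * U₁) ≤ t * e * N ((1 - V₁' * V₁'ᴴ) * V₁) := by
  set F := (1 - V₁' * V₁'ᴴ) * V₁ with hF
  have he : 0 ≤ e := (norm_nonneg E).trans hE
  have ht : 0 ≤ t := (norm_nonneg S').trans hS'
  have hV₂'F : V₂'ᴴ * F = V₂'ᴴ * V₁ := by
    rw [hF, ← Matrix.mul_assoc, Matrix.mul_sub, ← Matrix.mul_assoc, h'.right.symm.orthogonal,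
      Matrix.zero_mul, sub_zero, Matrix.mul_one]
  have hcross : U₂'ᴴ * U₁ * D = S' * (V₂'ᴴ * F) := by
    rw [Matrix.mul_assoc, ← h.mul_right_fst, ← Matrix.mul_assoc, ← hP, Matrix.mul_assoc U₂'ᴴ,
      h'.left_snd_mul, Matrix.mul_assoc, hV₂'F]
  calc N (U₂'ᴴ * U₁) ≤ e * N (U₂'ᴴ * U₁ * D) := hN.le_mul_of_mul_eq_one hDE hE _
    _ ≤ e * (t * N (V₂'ᴴ * F)) := by
      rw [hcross]; gcongr; exact hN.mul_le_of_le hS' _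
    _ ≤ e * (t * N F) := by
      gcongr
      exact hN.mul_le_of_le_one ((l2_opNorm_conjTranspose V₂').trans_le
        (l2_opNorm_le_one_of_isometry h'.right.right)) _
    _ = t * e * N F := by ring

lemma sin_right_le (h : IsBlockSVD A U₁ D V₁ U₂ S V₂)
    (h' : IsBlockSVD (P * A) U₁' D' V₁' U₂' S' V₂') (hP : P = U₁' * U₁'ᴴ + U₂' * U₂'ᴴ)
    (hDE : D * E = 1) (hE : ‖E‖ ≤ e) (hS : ‖S‖ ≤ t) (hS' : ‖S'‖ ≤ t) (hte : t * e < 1) :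
    N ((1 - V₁' * V₁'ᴴ) * V₁) ≤ e * N ((1 - P) * A * V₁) / (1 - t * e) := by
  have he : 0 ≤ e := (norm_nonneg E).trans hE
  have ht : 0 ≤ t := (norm_nonneg S).trans hS
  have hPproj : IsStarProjection P := hP ▸ h'.left.isStarProjection
  have hcross := hN.left_cross_le h h' (hP ▸ h'.left.conjTranspose_snd_mul) hDE hE hS'
  have hresid := hN.right_residual_le h hPproj hDE hE hS
  set F := (1 - V₁' * V₁'ᴴ) * V₁ with hF
  set φ := N ((1 - P) * A * V₁)
  have hFD : F * Dᴴ = (1 - V₁' * V₁'ᴴ) * (Aᴴ * ((1 - P) * U₁)) + V₂' * (S'ᴴ * (U₂'ᴴ * U₁)) := by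
    have hAP := h'.conjTranspose.one_sub_mul
    rw [conjTranspose_mul, ← star_eq_conjTranspose P, hPproj.isSelfAdjoint.star_eq] at hAP
    rw [hF, Matrix.mul_assoc, ← h.conjTranspose.mul_right_fst, ← Matrix.mul_assoc S'ᴴ,
      ← Matrix.mul_assoc V₂', ← Matrix.mul_assoc V₂', ← hAP]
    simp only [Matrix.mul_assoc, Matrix.sub_mul, Matrix.mul_sub, Matrix.one_mul]
    abel
  have hED : Dᴴ * Eᴴ = 1 := by
    rw [← conjTranspose_mul, mul_eq_one_comm.mp hDE, conjTranspose_one]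
  have hNF : N F ≤ e * ((1 + t * e) * φ + t * (t * e * N F)) := by
    refine (hN.le_mul_of_mul_eq_one hED ((l2_opNorm_conjTranspose E).trans_le hE) F).trans ?_
    rw [hFD]
    gcongr
    refine (hN.add_le _ _).trans (add_le_add ?_ ?_)
    · exact (hN.mul_le_of_le_one
        (isStarProjection_mul_conjTranspose h'.right.left).one_sub.norm_le _).trans hresid
    · calc N (V₂' * (S'ᴴ * (U₂'ᴴ * U₁))) ≤ N (S'ᴴ * (U₂'ᴴ * U₁)) :=
            hN.mul_le_of_le_one (l2_opNorm_le_one_of_isometry h'.right.right) _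
        _ ≤ t * N (U₂'ᴴ * U₁) := hN.mul_le_of_le ((l2_opNorm_conjTranspose S').trans_le hS') _
        _ ≤ t * (t * e * N F) := by gcongr
  rw [le_div_iff₀ (sub_pos.mpr hte)]
  have : (N F * (1 - t * e)) * (1 + t * e) ≤ (e * φ) * (1 + t * e) := by linarith
  exact le_of_mul_le_mul_right this (by positivity)

lemma sin_left_le (h : IsBlockSVD A U₁ D V₁ U₂ S V₂)
    (h' : IsBlockSVD (P * A) U₁' D' V₁' U₂' S' V₂') (hP : P = U₁' * U₁'ᴴ + U₂' * U₂'ᴴ)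
    (hDE : D * E = 1) (hE : ‖E‖ ≤ e) (hS : ‖S‖ ≤ t) (hS' : ‖S'‖ ≤ t) (hte : t * e < 1) :
    N ((1 - U₁' * U₁'ᴴ) * U₁) ≤ e * N ((1 - P) * A * V₁) / (1 - t * e) := by
  have he : 0 ≤ e := (norm_nonneg E).trans hE
  have ht : 0 ≤ t := (norm_nonneg S).trans hS
  have hcross := hN.left_cross_le h h' (hP ▸ h'.left.conjTranspose_snd_mul) hDE hE hS'
  have hright := hN.sin_right_le h h' hP hDE hE hS hS' hte
  set φ := N ((1 - P) * A * V₁) with hφ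
  have hsplit : (1 - U₁' * U₁'ᴴ) * U₁ = (1 - P) * U₁ + U₂' * (U₂'ᴴ * U₁) := by
    rw [hP, ← Matrix.mul_assoc, ← Matrix.add_mul, ← sub_sub, sub_add_cancel]
  have hresid : N ((1 - P) * U₁) ≤ e * φ := by
    rw [hφ, Matrix.mul_assoc, h.mul_right_fst, ← Matrix.mul_assoc]
    exact hN.le_mul_of_mul_eq_one hDE hE _
  calc N ((1 - U₁' * U₁'ᴴ) * U₁) ≤ N ((1 - P) * U₁) + N (U₂' * (U₂'ᴴ * U₁)) :=
        hsplit ▸ hN.add_le _ _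
    _ ≤ e * φ + N (U₂'ᴴ * U₁) :=
      add_le_add hresid (hN.mul_le_of_le_one (l2_opNorm_le_one_of_isometry h'.left.right) _)
    _ ≤ e * φ + t * e * (e * φ / (1 - t * e)) := by
      gcongr
      exact hcross.trans (by gcongr)
    _ = e * φ / (1 - t * e) := by
      have hne : 1 - t * e ≠ 0 := (sub_pos.mpr hte).ne'
      rw [eq_div_iff hne, add_mul, mul_assoc (t * e), div_mul_cancel₀ _ hne]
      ring

end IsSymmetricSeminorm

end Wedin

section SubspaceIteration

open scoped Matrix.Norms.L2Operator

variable {𝕜 : Type*} [RCLike 𝕜]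

lemma pow_mul_mul_pow_eq {R : Type*} [Monoid R] {D E D' E' : R} (hDE : D * E = 1)
    (hDE' : D' * E' = 1) (q : ℕ) : (D * D') ^ q * D * (E * E') ^ q = D := by
  induction q with
  | zero => simp
  | succ q ih =>
    calc (D * D') ^ (q + 1) * D * (E * E') ^ (q + 1)
        = (D * D') ^ q * (D * (D' * (D * E) * E')) * (E * E') ^ q := by
          simp only [pow_succ (D * D'), pow_succ' (E * E'), mul_assoc]
      _ = D := by rw [hDE, mul_one, hDE', mul_one, ih]

lemma l2_opNorm_mul_conjTranspose_le {m n : Type*} [Fintype m] [Fintype n] [DecidableEq m]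
    [DecidableEq n] {M : Matrix m n 𝕜} {r : ℝ} (hM : ‖M‖ ≤ r) : ‖M * Mᴴ‖ ≤ r ^ 2 := by
  rw [← l2_opNorm_conjTranspose] at hM
  have := l2_opNorm_conjTranspose_mul_self Mᴴ
  rw [conjTranspose_conjTranspose, ← sq] at this
  exact this.trans_le (pow_le_pow_left₀ (norm_nonneg _) hM 2)

lemma IsBlockSVD.powerIterate_mul_mul_pow {m n k m₂ n₂ ρ : Type*} [Fintype m] [Fintype n]
    [Fintype k] [Fintype m₂] [Fintype n₂] [Fintype ρ] [DecidableEq m] [DecidableEq k]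
    [DecidableEq m₂] [DecidableEq n₂] {A : Matrix m n 𝕜} {D E : Matrix k k 𝕜} {S : Matrix m₂ n₂ 𝕜}
    {U₁ : Matrix m k 𝕜} {U₂ : Matrix m m₂ 𝕜} {V₁ : Matrix n k 𝕜} {V₂ : Matrix n n₂ 𝕜}
    {Ω : Matrix n ρ 𝕜} {W : Matrix ρ k 𝕜} (h : IsBlockSVD A U₁ D V₁ U₂ S V₂)
    (hW : V₁ᴴ * Ω * W = 1) (hDE : D * E = 1) (q : ℕ) :
    (A * Aᴴ) ^ q * A * Ω * (W * (E * Eᴴ) ^ q) =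
      A * V₁ + U₂ * ((S * Sᴴ) ^ q * (S * (V₂ᴴ * Ω * W) * (E * Eᴴ) ^ q)) := by
  have hDE' : Dᴴ * Eᴴ = 1 := by
    rw [← conjTranspose_mul, mul_eq_one_comm.mp hDE, conjTranspose_one]
  calc (A * Aᴴ) ^ q * A * Ω * (W * (E * Eᴴ) ^ q)
      = U₁ * ((D * Dᴴ) ^ q * D * (V₁ᴴ * Ω * W) * (E * Eᴴ) ^ q) +
        U₂ * ((S * Sᴴ) ^ q * (S * (V₂ᴴ * Ω * W) * (E * Eᴴ) ^ q)) := by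
        rw [(h.powerIterate q).eq]
        simp only [Matrix.add_mul, Matrix.mul_assoc]
    _ = A * V₁ + U₂ * ((S * Sᴴ) ^ q * (S * (V₂ᴴ * Ω * W) * (E * Eᴴ) ^ q)) := by
        rw [hW, Matrix.mul_one, pow_mul_mul_pow_eq hDE hDE', h.mul_right_fst]

lemma IsSymmetricSeminorm.iteration_residual_le
    {N : ∀ {a b : ℕ}, Matrix (Fin a) (Fin b) 𝕜 → ℝ} (hN : IsSymmetricSeminorm N)
    {m n k m₂ n₂ ρ : ℕ} {A : Matrix (Fin m) (Fin n) 𝕜} {D E : Matrix (Fin k) (Fin k) 𝕜}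
    {S : Matrix (Fin m₂) (Fin n₂) 𝕜}
    {U₁ : Matrix (Fin m) (Fin k) 𝕜} {U₂ : Matrix (Fin m) (Fin m₂) 𝕜}
    {V₁ : Matrix (Fin n) (Fin k) 𝕜} {V₂ : Matrix (Fin n) (Fin n₂) 𝕜}
    {P : Matrix (Fin m) (Fin m) 𝕜} {Ω : Matrix (Fin n) (Fin ρ) 𝕜} {W : Matrix (Fin ρ) (Fin k) 𝕜}
    {e t : ℝ} {q : ℕ} (h : IsBlockSVD A U₁ D V₁ U₂ S V₂) (hP : IsStarProjection P)
    (hPY : P * ((A * Aᴴ) ^ q * A * Ω) = (A * Aᴴ) ^ q * A * Ω) (hW : V₁ᴴ * Ω * W = 1)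
    (hDE : D * E = 1) (hE : ‖E‖ ≤ e) (hS : ‖S‖ ≤ t) :
    N ((1 - P) * A * V₁) ≤ (t * e) ^ (2 * q) * N S * ‖V₂ᴴ * Ω * W‖ := by
  set Z := V₂ᴴ * Ω * W
  have hresid : (1 - P) * A * V₁ = (P - 1) * (U₂ * ((S * Sᴴ) ^ q * (S * Z * (E * Eᴴ) ^ q))) := by
    have hzero : (1 - P) * ((A * Aᴴ) ^ q * A * Ω * (W * (E * Eᴴ) ^ q)) = 0 := by
      rw [← Matrix.mul_assoc, Matrix.sub_mul, hPY, Matrix.one_mul, sub_self, Matrix.zero_mul]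
    rw [h.powerIterate_mul_mul_pow hW hDE, Matrix.mul_add] at hzero
    rw [Matrix.mul_assoc, ← neg_sub 1 P, Matrix.neg_mul]
    exact eq_neg_of_add_eq_zero_left hzero
  calc N ((1 - P) * A * V₁)
      ≤ N (U₂ * ((S * Sᴴ) ^ q * (S * Z * (E * Eᴴ) ^ q))) := by
        rw [hresid]
        exact hN.mul_le_of_le_one (norm_sub_rev P 1 ▸ hP.one_sub.norm_le) _
    _ ≤ N ((S * Sᴴ) ^ q * (S * Z * (E * Eᴴ) ^ q)) :=
      hN.mul_le_of_le_one (l2_opNorm_le_one_of_isometry h.left.right) _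
    _ ≤ (t ^ 2) ^ q * N (S * Z * (E * Eᴴ) ^ q) :=
      hN.pow_mul_le (l2_opNorm_mul_conjTranspose_le hS) q _
    _ ≤ (t ^ 2) ^ q * ((e ^ 2) ^ q * (N S * ‖Z‖)) := by
      gcongr
      exact (hN.mul_pow_le (l2_opNorm_mul_conjTranspose_le hE) q _).trans
        (by gcongr; exact hN.mul_le_right S Z)
    _ = (t * e) ^ (2 * q) * N S * ‖Z‖ := by ring

open scoped ComplexOrder in
lemma mul_rpinv {m n : ℕ} {M : Matrix (Fin m) (Fin n) ℂ} (hM : M.rank = m) : M * rpinv M = 1 := by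
  have hunit : IsUnit (M * Mᴴ) := by
    rw [← mulVec_surjective_iff_isUnit, ← coe_mulVecLin, ← LinearMap.range_eq_top]
    refine Submodule.eq_top_of_finrank_eq ?_
    rw [← Matrix.rank, rank_self_mul_conjTranspose, hM, Module.finrank_fin_fun]
  rw [rpinv, ← Matrix.mul_assoc, mul_nonsing_inv _ ((isUnit_iff_isUnit_det _).mp hunit)]

end SubspaceIteration

section AngleBounds

open scoped Matrix.Norms.L2Operator

lemma IsSymmetricSeminorm.max_sin_le {𝕜 : Type*} [RCLike 𝕜]
    {N : ∀ {a b : ℕ}, Matrix (Fin a) (Fin b) 𝕜 → ℝ} (hN : IsSymmetricSeminorm N)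
    {m n k m₂ n₂ ρ a b c d q : ℕ} {A : Matrix (Fin m) (Fin n) 𝕜} {D E : Matrix (Fin k) (Fin k) 𝕜}
    {S : Matrix (Fin m₂) (Fin n₂) 𝕜}
    {U₁ : Matrix (Fin m) (Fin k) 𝕜} {U₂ : Matrix (Fin m) (Fin m₂) 𝕜}
    {V₁ : Matrix (Fin n) (Fin k) 𝕜} {V₂ : Matrix (Fin n) (Fin n₂) 𝕜}
    {P : Matrix (Fin m) (Fin m) 𝕜} {Ω : Matrix (Fin n) (Fin ρ) 𝕜} {W : Matrix (Fin ρ) (Fin k) 𝕜}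
    {U₁' : Matrix (Fin m) (Fin a) 𝕜} {D' : Matrix (Fin a) (Fin b) 𝕜}
    {V₁' : Matrix (Fin n) (Fin b) 𝕜} {U₂' : Matrix (Fin m) (Fin c) 𝕜}
    {S' : Matrix (Fin c) (Fin d) 𝕜} {V₂' : Matrix (Fin n) (Fin d) 𝕜} {e t : ℝ}
    (h : IsBlockSVD A U₁ D V₁ U₂ S V₂) (h' : IsBlockSVD (P * A) U₁' D' V₁' U₂' S' V₂')
    (hP : P = U₁' * U₁'ᴴ + U₂' * U₂'ᴴ)
    (hPY : P * ((A * Aᴴ) ^ q * A * Ω) = (A * Aᴴ) ^ q * A * Ω) (hW : V₁ᴴ * Ω * W = 1)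
    (hDE : D * E = 1) (hE : ‖E‖ ≤ e) (hS : ‖S‖ ≤ t) (hS' : ‖S'‖ ≤ t) (hte : t * e < 1) :
    max (N ((1 - U₁' * U₁'ᴴ) * U₁)) (N ((1 - V₁' * V₁'ᴴ) * V₁)) ≤
      (t * e) ^ (2 * q) / (1 - t * e) * (e * N S) * ‖V₂ᴴ * Ω * W‖ := by
  have he : 0 ≤ e := (norm_nonneg E).trans hE
  have hresid : e * N ((1 - P) * A * V₁) / (1 - t * e) ≤
      e * ((t * e) ^ (2 * q) * N S * ‖V₂ᴴ * Ω * W‖) / (1 - t * e) := by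
    have := (sub_pos.mpr hte).le
    gcongr
    exact hN.iteration_residual_le h (hP ▸ h'.left.isStarProjection) hPY hW hDE hE hS
  calc max (N ((1 - U₁' * U₁'ᴴ) * U₁)) (N ((1 - V₁' * V₁'ᴴ) * V₁))
      ≤ e * N ((1 - P) * A * V₁) / (1 - t * e) :=
        max_le (hN.sin_left_le h h' hP hDE hE hS hS' hte)
          (hN.sin_right_le h h' hP hDE hE hS hS' hte)
    _ ≤ e * ((t * e) ^ (2 * q) * N S * ‖V₂ᴴ * Ω * W‖) / (1 - t * e) := hresid
    _ = (t * e) ^ (2 * q) / (1 - t * e) * (e * N S) * ‖V₂ᴴ * Ω * W‖ := by ring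

lemma conjTranspose_mul_self_mul {𝕜 m n l : Type*} [RCLike 𝕜] [Fintype m] [Fintype n]
    [DecidableEq n] [DecidableEq l] {Q : Matrix m n 𝕜} {W : Matrix n l 𝕜} (hQ : Qᴴ * Q = 1)
    (hW : Wᴴ * W = 1) : (Q * W)ᴴ * (Q * W) = 1 := by
  rw [conjTranspose_mul, Matrix.mul_assoc, ← Matrix.mul_assoc Qᴴ, hQ, Matrix.one_mul, hW]

lemma mul_conjTranspose_self_mul {𝕜 m n : Type*} [RCLike 𝕜] [Fintype n] [DecidableEq n]
    (Q : Matrix m n 𝕜) {W : Matrix n n 𝕜} (hW : Wᴴ * W = 1) : Q * W * (Q * W)ᴴ = Q * Qᴴ := by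
  rw [conjTranspose_mul, Matrix.mul_assoc, ← Matrix.mul_assoc W, mul_eq_one_comm.mp hW,
    Matrix.one_mul]

theorem spectral_frobenius_angles_truncated_general
    {N : ∀ {a b : ℕ}, Matrix (Fin a) (Fin b) ℂ → ℝ} (hN : IsSymmetricSeminorm N)
    {m n k m₂ n₂ ρ l : ℕ} (q : ℕ) {A : Matrix (Fin m) (Fin n) ℂ}
    {U : Matrix (Fin m) (Fin (k + m₂)) ℂ} {V : Matrix (Fin n) (Fin (k + n₂)) ℂ} {σ : ℕ → ℝ}
    (hU : Uᴴ * U = 1) (hV : Vᴴ * V = 1) (hσ0 : ∀ i, 0 ≤ σ i) (hσ : Antitone σ)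
    (hA : A = U * diagRect σ 0 (k + m₂) (k + n₂) * Vᴴ) (hgap : σ k < σ (k - 1))
    {Ω : Matrix (Fin n) (Fin l) ℂ} (hΩ : ((colsL V)ᴴ * Ω).rank = k)
    {Q : Matrix (Fin m) (Fin (k + ρ)) ℂ} {R : Matrix (Fin (k + ρ)) (Fin l) ℂ} (hQ : Qᴴ * Q = 1)
    (hQR : (A * Aᴴ) ^ q * A * Ω = Q * R)
    {UB : Matrix (Fin (k + ρ)) (Fin (k + ρ)) ℂ} {Vh : Matrix (Fin n) (Fin (k + ρ)) ℂ} {σh : ℕ → ℝ}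
    (hUB : UBᴴ * UB = 1) (hVh : Vhᴴ * Vh = 1) (hσh0 : ∀ i, 0 ≤ σh i) (hσh : Antitone σh)
    (hB : Qᴴ * A = UB * diagRect σh 0 (k + ρ) (k + ρ) * Vhᴴ) :
    max (N ((1 - colsL (Q * UB) * (colsL (Q * UB))ᴴ) * colsL U))
        (N ((1 - colsL Vh * (colsL Vh)ᴴ) * colsL V)) ≤
      ((σ k / σ (k - 1)) ^ (2 * q) / (1 - (σ k / σ (k - 1)))) *
        (N (diagRect σ k m₂ n₂) / σ (k - 1)) *
          sval ((colsR V)ᴴ * Ω * rpinv ((colsL V)ᴴ * Ω)) 0 := by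
  have hpos : 0 < σ (k - 1) := (hσ0 k).trans_lt hgap
  have hle (i : Fin k) : σ (k - 1) ≤ σ i := hσ (by omega)
  have hγ : σ k * (σ (k - 1))⁻¹ < 1 := (mul_inv_lt_iff₀ hpos).mpr (by simpa using hgap)
  have hW := conjTranspose_mul_self_mul hQ hUB
  have hQA : Q * Qᴴ * A = Q * UB * diagRect σh 0 (k + ρ) (k + ρ) * Vhᴴ := by
    simp only [Matrix.mul_assoc, hB]
  have hP : Q * Qᴴ = colsL (Q * UB) * (colsL (Q * UB))ᴴ + colsR (Q * UB) * (colsR (Q * UB))ᴴ := by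
    rw [← mul_conjTranspose_eq_colsL_add_colsR, mul_conjTranspose_self_mul Q hUB]
  have hPY : Q * Qᴴ * ((A * Aᴴ) ^ q * A * Ω) = (A * Aᴴ) ^ q * A * Ω := by
    rw [hQR, Matrix.mul_assoc, ← Matrix.mul_assoc Qᴴ, hQ, Matrix.one_mul]
  have hritz : (Q * UB)ᴴ * A * Vh = diagRect σh 0 (k + ρ) (k + ρ) := by
    rw [conjTranspose_mul, Matrix.mul_assoc UBᴴ, hB, Matrix.mul_assoc, Matrix.mul_assoc, hVh,
      Matrix.mul_one, ← Matrix.mul_assoc, hUB, Matrix.one_mul]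
  have h := isBlockSVD_diagRect hU hV hA
  have h' := isBlockSVD_diagRect hW hVh hQA
  have hS := l2_opNorm_diagRect_le hσ0 hσ k m₂ n₂
  have hS' := (h.l2_opNorm_diagRect_le_of_compression hW hVh hσh0 hσh hritz).trans hS
  simpa only [← div_eq_mul_inv, inv_mul_eq_div, Matrix.mul_assoc, sval_zero] using
    hN.max_sin_le h h' hP hPY (mul_rpinv hΩ)
      (diagonal_ofReal_mul_diagonal_inv fun i => hpos.trans_le (hle i))
      (l2_opNorm_diagonal_ofReal_inv_le hpos hle) hS hS' hγ

end AngleBounds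

/-- Theorem 3.5 (spectral and Frobenius norms): accuracy of the extracted
rank-k singular subspaces, without the factor `√2`. -/
theorem spectral_frobenius_angles_truncated
    {k m₂ n₂ ρ : ℕ} (q : ℕ) (hk : 1 ≤ k)
    (A : Matrix (Fin (k + m₂)) (Fin (k + n₂)) ℂ)
    (U : Matrix (Fin (k + m₂)) (Fin (k + m₂)) ℂ)
    (V : Matrix (Fin (k + n₂)) (Fin (k + n₂)) ℂ)
    (σ : ℕ → ℝ)
    (hU : Uᴴ * U = 1) (hU' : U * Uᴴ = 1)
    (hV : Vᴴ * V = 1) (hV' : V * Vᴴ = 1)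
    (hσ0 : ∀ i, 0 ≤ σ i) (hσm : ∀ i j, i ≤ j → σ j ≤ σ i)
    (hA : A = U * diagRect σ 0 (k + m₂) (k + n₂) * Vᴴ)
    (hrank : 0 < σ (k - 1)) (hgap : σ k < σ (k - 1))
    (Ω : Matrix (Fin (k + n₂)) (Fin (k + ρ)) ℂ)
    (hΩ : ((colsL V)ᴴ * Ω).rank = k)
    (Q : Matrix (Fin (k + m₂)) (Fin (k + ρ)) ℂ)
    (R : Matrix (Fin (k + ρ)) (Fin (k + ρ)) ℂ)
    (hQ : Qᴴ * Q = 1) (hR : R.BlockTriangular id)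
    (hQR : (A * Aᴴ) ^ q * A * Ω = Q * R)
    (UB : Matrix (Fin (k + ρ)) (Fin (k + ρ)) ℂ)
    (Vh : Matrix (Fin (k + n₂)) (Fin (k + ρ)) ℂ)
    (σh : ℕ → ℝ)
    (hUB : UBᴴ * UB = 1) (hUB' : UB * UBᴴ = 1)
    (hVh : Vhᴴ * Vh = 1)
    (hσh0 : ∀ i, 0 ≤ σh i) (hσhm : ∀ i j, i ≤ j → σh j ≤ σh i)
    (hB : Qᴴ * A = UB * diagRect σh 0 (k + ρ) (k + ρ) * Vhᴴ)
    :
    ∀ p ∈ ({2, ⊤} : Set ℝ≥0∞),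
      max (schatten p ((1 - colsL (Q * UB) * (colsL (Q * UB))ᴴ) * colsL U)) (schatten p ((1 - colsL Vh * (colsL Vh)ᴴ) * colsL V)) ≤
        ((σ k / σ (k - 1)) ^ (2 * q) / (1 - (σ k / σ (k - 1)))) *
          (schatten p (diagRect σ k m₂ n₂) / σ (k - 1)) * sval ((colsR V)ᴴ * Ω * rpinv ((colsL V)ᴴ * Ω)) 0 :=
  fun _ hp => spectral_frobenius_angles_truncated_general (isSymmetricSeminorm_schatten hp) q hU hV
    hσ0 (fun i j => hσm i j) hA hgap hΩ hQ hQR hUB hVh hσh0 (fun i j => hσhm i j) hB
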